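/- Let Σ be a CNF theory and V ⊆ 𝒜. If Σ is Horn expressible (respectively: Krom expressible, Horn renamable expressible, q-Horn expressible), then Forget(Σ, V) is Horn expressible (respectively: Krom expressible, Horn renamable expressible, q-Horn expressible). -/

import Mathlib

variable {α : Type*} [Fintype α] [DecidableEq α]

/-- A clause (or term): a finite set of literals, where a literal is an atom
paired with a polarity (`true` = positive occurrence, `false` = negated). -/
abbrev Clause (α : Type*) := Finset (α × Bool)

/-- A finite set of literals is a legal clause/term if it contains no
complementary pair of literals. -/
def IsClause (c : Clause α) : Prop := ∀ p : α, ¬((p, true) ∈ c ∧ (p, false) ∈ c)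

instance : DecidablePred (IsClause (α := α)) := fun c =>
  decidable_of_iff (∀ p : α, ¬((p, true) ∈ c ∧ (p, false) ∈ c)) Iff.rfl

/-- The atoms occurring in a clause/term. -/
def varsC (c : Clause α) : Finset α := c.image Prod.fst

/-- The atoms occurring positively in a clause/term. -/
def posC (c : Clause α) : Finset α := (c.filter fun l => l.2 = true).image Prod.fst

/-- The atoms occurring negatively in a clause/term. -/
def negC (c : Clause α) : Finset α := (c.filter fun l => l.2 = false).image Prod.fst

/-- The resolvent of two clauses on atom `p`. -/
def res (c c' : Clause α) (p : α) : Clause α :=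
  (c ∪ c') \ ({(p, true), (p, false)} : Finset (α × Bool))

/-- `c` and `c'` are resolvable on atom `p`: `p` occurs in one of them and `¬p` in
the other, and the resolvent contains no complementary pair of literals. -/
def ResolvableOn (c c' : Clause α) (p : α) : Prop :=
  ((p, true) ∈ c ∧ (p, false) ∈ c' ∨ (p, false) ∈ c ∧ (p, true) ∈ c') ∧ IsClause (res c c' p)

/-- Renaming of a literal: flip the polarity of atoms in `V`. -/
def renLit (V : Finset α) (l : α × Bool) : α × Bool := if l.1 ∈ V then (l.1, !l.2) else l

/-- Renaming of a clause w.r.t. the atoms in `V`. -/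
def renClause (V : Finset α) (c : Clause α) : Clause α := c.image (renLit V)

/-- Renaming of a CNF theory w.r.t. the atoms in `V`. -/
def renTheory (V : Finset α) (T : Finset (Clause α)) : Finset (Clause α) := T.image (renClause V)

/-- A Horn clause: at most one positive literal. -/
def HornClause (c : Clause α) : Prop := (posC c).card ≤ 1

/-- A Horn theory: a finite set of Horn clauses. -/
def IsHornTheory (T : Finset (Clause α)) : Prop := ∀ c ∈ T, HornClause c

/-- A Krom theory: each clause contains at most 2 literals. -/
def IsKromTheory (T : Finset (Clause α)) : Prop := ∀ c ∈ T, c.card ≤ 2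

/-- `T` is Horn renamable: some renaming of `T` is a Horn theory. -/
def IsRenHorn (T : Finset (Clause α)) : Prop := ∃ V : Finset α, IsHornTheory (renTheory V T)

/-- The QH-conditions for sets of atoms `Q`, `H` and a clause `c`. -/
def QHcond (Q H : Finset α) (c : Clause α) : Prop :=
  (varsC c ∩ Q).card ≤ 2 ∧ (posC c ∩ H).card ≤ 1 ∧
    ((posC c ∩ H).card = 1 → varsC c ∩ Q = ∅)

/-- The atoms occurring in a CNF theory. -/
def varsT (T : Finset (Clause α)) : Finset α := T.sup varsC

/-- `T` has a QH-partition: a partition `{Q, H}` of its atoms satisfying the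
QH-conditions for each of its clauses. -/
def HasQHPartition (T : Finset (Clause α)) : Prop :=
  ∃ Q H : Finset α, Q ∩ H = ∅ ∧ Q ∪ H = varsT T ∧ ∀ c ∈ T, QHcond Q H c

/-- `T` is q-Horn: some renaming of `T` has a QH-partition. -/
def IsQHorn (T : Finset (Clause α)) : Prop := ∃ V : Finset α, HasQHPartition (renTheory V T)

/-- Satisfaction of a literal by an interpretation (a set of atoms). -/
def litSat (I : Set α) (l : α × Bool) : Prop := if l.2 then l.1 ∈ I else l.1 ∉ I

/-- Satisfaction of a clause (read disjunctively). -/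
def clauseSat (I : Set α) (c : Clause α) : Prop := ∃ l ∈ c, litSat I l

/-- Satisfaction of a term (read conjunctively). -/
def termSat (I : Set α) (t : Clause α) : Prop := ∀ l ∈ t, litSat I l

/-- Satisfaction of a CNF theory. -/
def cnfSat (I : Set α) (T : Finset (Clause α)) : Prop := ∀ c ∈ T, clauseSat I c

/-- One step of the resolution closure. -/
def resStep (S : Set (Clause α)) : Set (Clause α) :=
  S ∪ {d | ∃ c ∈ S, ∃ c' ∈ S, ∃ p : α, ResolvableOn c c' p ∧ d = res c c' p}

/-- The iterated resolution closure `res^n_T`. -/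
def resIter (T : Finset (Clause α)) : ℕ → Set (Clause α)
  | 0 => (↑T : Set (Clause α))
  | n + 1 => resStep (resIter T n)

/-- Propositional formulas over atoms `α`. -/
inductive PropForm (α : Type*) where
  | var : α → PropForm α
  | tru : PropForm α
  | fls : PropForm α
  | neg : PropForm α → PropForm α
  | conj : PropForm α → PropForm α → PropForm α
  | disj : PropForm α → PropForm α → PropForm α

namespace PropForm

/-- Satisfaction of a formula by an interpretation. -/
def Sat (I : Set α) : PropForm α → Prop
  | var p => p ∈ I
  | tru => True
  | fls => False
  | neg φ => ¬ Sat I φ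
  | conj φ ψ => Sat I φ ∧ Sat I ψ
  | disj φ ψ => Sat I φ ∨ Sat I ψ

/-- Logical equivalence: same models. -/
def equivalent (φ ψ : PropForm α) : Prop := ∀ I : Set α, Sat I φ ↔ Sat I ψ

/-- Entailment: every model of `φ` is a model of `ψ`. -/
def entails (φ ψ : PropForm α) : Prop := ∀ I : Set α, Sat I φ → Sat I ψ

/-- The atoms occurring in a formula. -/
def vars : PropForm α → Finset α
  | var p => {p}
  | tru => ∅
  | fls => ∅
  | neg φ => vars φ
  | conj φ ψ => vars φ ∪ vars ψ
  | disj φ ψ => vars φ ∪ vars ψ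

/-- Substitution of the formula `χ` for the atom `p`. -/
def subst (p : α) (χ : PropForm α) : PropForm α → PropForm α
  | var q => if q = p then χ else var q
  | tru => tru
  | fls => fls
  | neg φ => neg (subst p χ φ)
  | conj φ ψ => conj (subst p χ φ) (subst p χ ψ)
  | disj φ ψ => disj (subst p χ φ) (subst p χ ψ)

/-- Forgetting a single atom: `Forget(φ, {p}) = φ[p/⊤] ∨ φ[p/⊥]`. -/
def forget1 (φ : PropForm α) (p : α) : PropForm α := disj (subst p tru φ) (subst p fls φ)

/-- Forgetting a set of atoms (presented as a list), one atom at a time: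
`Forget(φ, ∅) = φ` and `Forget(φ, V ∪ {p}) = Forget(Forget(φ, {p}), V)`. -/
def Forget : PropForm α → List α → PropForm α
  | φ, [] => φ
  | φ, p :: V => Forget (forget1 φ p) V

/-- Renaming of a formula: replace each occurrence of an atom `p ∈ V` by `¬p`. -/
def renForm (V : Finset α) : PropForm α → PropForm α
  | var p => if p ∈ V then neg (var p) else var p
  | tru => tru
  | fls => fls
  | neg φ => neg (renForm V φ)
  | conj φ ψ => conj (renForm V φ) (renForm V ψ)
  | disj φ ψ => disj (renForm V φ) (renForm V ψ)

/-- `φ` is irrelevant to the atoms in `V`: it is equivalent to a formula not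
mentioning any atom of `V`. -/
def IR (φ : PropForm α) (V : List α) : Prop :=
  ∃ φ' : PropForm α, equivalent φ φ' ∧ ∀ p ∈ V, p ∉ vars φ'

end PropForm

/-- The formula corresponding to a literal. -/
def litToForm (l : α × Bool) : PropForm α :=
  if l.2 then PropForm.var l.1 else PropForm.neg (PropForm.var l.1)

/-- The disjunction of the literals of a clause. -/
noncomputable def clauseToForm (c : Clause α) : PropForm α :=
  c.toList.foldr (fun l φ => PropForm.disj (litToForm l) φ) PropForm.fls

/-- The conjunction of the clauses of a CNF theory. -/
noncomputable def cnfToForm (T : Finset (Clause α)) : PropForm α :=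
  T.toList.foldr (fun c φ => PropForm.conj (clauseToForm c) φ) PropForm.tru

/-- `φ` is Horn expressible. -/
def HornExpressible (φ : PropForm α) : Prop :=
  ∃ T : Finset (Clause α), (∀ c ∈ T, IsClause c) ∧ IsHornTheory T ∧
    PropForm.equivalent φ (cnfToForm T)

/-- `φ` is Krom expressible. -/
def KromExpressible (φ : PropForm α) : Prop :=
  ∃ T : Finset (Clause α), (∀ c ∈ T, IsClause c) ∧ IsKromTheory T ∧
    PropForm.equivalent φ (cnfToForm T)

/-- `φ` is renamable-Horn expressible. -/
def RenHornExpressible (φ : PropForm α) : Prop :=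
  ∃ T : Finset (Clause α), (∀ c ∈ T, IsClause c) ∧ IsRenHorn T ∧
    PropForm.equivalent φ (cnfToForm T)

/-- `φ` is q-Horn expressible. -/
def QHornExpressible (φ : PropForm α) : Prop :=
  ∃ T : Finset (Clause α), (∀ c ∈ T, IsClause c) ∧ IsQHorn T ∧
    PropForm.equivalent φ (cnfToForm T)

/-- A formula entails a clause. -/
def EntailsClause (φ : PropForm α) (c : Clause α) : Prop :=
  ∀ I : Set α, PropForm.Sat I φ → clauseSat I c

/-- A prime implicate of a formula. -/
def IsPrimeImplicate (φ : PropForm α) (c : Clause α) : Prop :=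
  IsClause c ∧ EntailsClause φ c ∧ ∀ c' ⊂ c, ¬ EntailsClause φ c'

/-- A term entails a formula. -/
def TermEntails (t : Clause α) (φ : PropForm α) : Prop :=
  ∀ I : Set α, termSat I t → PropForm.Sat I φ

/-- A prime implicant of a formula. -/
def IsPrimeImplicant (φ : PropForm α) (t : Clause α) : Prop :=
  IsClause t ∧ TermEntails t φ ∧ ∀ t' ⊂ t, ¬ TermEntails t' φ

/-- A CNF theory entails a clause. -/
def TheoryEntailsClause (T : Finset (Clause α)) (c : Clause α) : Prop :=
  ∀ I : Set α, cnfSat I T → clauseSat I c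

/-- A prime implicate of a CNF theory. -/
def IsPrimeImplicateT (T : Finset (Clause α)) (c : Clause α) : Prop :=
  IsClause c ∧ TheoryEntailsClause T c ∧ ∀ c' ⊂ c, ¬ TheoryEntailsClause T c'

/-- The set of prime implicates of a CNF theory, as a finite theory. -/
noncomputable def PI (T : Finset (Clause α)) : Finset (Clause α) :=
  (Set.toFinite {c : Clause α | IsPrimeImplicateT T c}).toFinset

/-- Strong unfolding of a CNF theory w.r.t. an atom `p`: keep the clauses not
mentioning `p`, and replace the clauses containing the positive literal `p` by all
their resolvents with clauses containing `¬p`; clauses containing `¬p` are removed. -/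
def unfold1 (T : Finset (Clause α)) (p : α) : Finset (Clause α) :=
  T.filter (fun c => (p, true) ∉ c ∧ (p, false) ∉ c) ∪
    ((T ×ˢ T).filter fun cc =>
        (p, true) ∈ cc.1 ∧ (p, false) ∈ cc.2 ∧ IsClause (res cc.1 cc.2 p)).image
      fun cc => res cc.1 cc.2 p

/-- Iterated strong unfolding w.r.t. a set of atoms (presented as a list):
`unfold(T, ∅) = T` and `unfold(T, V ∪ {p}) = unfold(unfold(T, p), V)`. -/
def unfoldList (T : Finset (Clause α)) : List α → Finset (Clause α)
  | [] => T
  | p :: V => unfoldList (unfold1 T p) V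

theorem sat_clauseToForm (I : Set α) (c : Clause α) :
    PropForm.Sat I (clauseToForm c) ↔ clauseSat I c := by
  have key : ∀ L : List (α × Bool),
      PropForm.Sat I (L.foldr (fun l φ => PropForm.disj (litToForm l) φ) PropForm.fls) ↔
        ∃ l ∈ L, litSat I l := by
    intro L
    induction L with
    | nil => simp [PropForm.Sat]
    | cons a L ih =>
      have ha : PropForm.Sat I (litToForm a) ↔ litSat I a := by
        unfold litToForm litSat
        split <;> simp [PropForm.Sat]
      simp only [List.foldr_cons, PropForm.Sat, ih, ha, List.mem_cons, exists_eq_or_imp]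
  unfold clauseToForm clauseSat
  rw [key]
  simp

theorem sat_cnfToForm (I : Set α) (T : Finset (Clause α)) :
    PropForm.Sat I (cnfToForm T) ↔ cnfSat I T := by
  have key : ∀ L : List (Clause α),
      PropForm.Sat I (L.foldr (fun c φ => PropForm.conj (clauseToForm c) φ) PropForm.tru) ↔
        ∀ c ∈ L, clauseSat I c := by
    intro L
    induction L with
    | nil => simp [PropForm.Sat]
    | cons a L ih =>
      simp only [List.foldr_cons, PropForm.Sat, ih, sat_clauseToForm, List.mem_cons,
        forall_eq_or_imp]
  unfold cnfToForm cnfSat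
  rw [key]
  simp

theorem sat_subst_tru (p : α) (I : Set α) (φ : PropForm α) :
    PropForm.Sat I (PropForm.subst p PropForm.tru φ) ↔ PropForm.Sat (insert p I) φ := by
  induction φ with
  | var q =>
    by_cases h : q = p <;> simp [PropForm.subst, PropForm.Sat, h]
  | tru => simp [PropForm.subst, PropForm.Sat]
  | fls => simp [PropForm.subst, PropForm.Sat]
  | neg φ ih => simp [PropForm.subst, PropForm.Sat, ih]
  | conj φ ψ ih1 ih2 => simp [PropForm.subst, PropForm.Sat, ih1, ih2]
  | disj φ ψ ih1 ih2 => simp [PropForm.subst, PropForm.Sat, ih1, ih2]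

theorem sat_subst_fls (p : α) (I : Set α) (φ : PropForm α) :
    PropForm.Sat I (PropForm.subst p PropForm.fls φ) ↔ PropForm.Sat (I \ {p}) φ := by
  induction φ with
  | var q =>
    by_cases h : q = p <;> simp [PropForm.subst, PropForm.Sat, h]
  | tru => simp [PropForm.subst, PropForm.Sat]
  | fls => simp [PropForm.subst, PropForm.Sat]
  | neg φ ih => simp [PropForm.subst, PropForm.Sat, ih]
  | conj φ ψ ih1 ih2 => simp [PropForm.subst, PropForm.Sat, ih1, ih2]
  | disj φ ψ ih1 ih2 => simp [PropForm.subst, PropForm.Sat, ih1, ih2]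

theorem sat_forget1 (p : α) (I : Set α) (φ : PropForm α) :
    PropForm.Sat I (PropForm.forget1 φ p) ↔
      PropForm.Sat (insert p I) φ ∨ PropForm.Sat (I \ {p}) φ := by
  simp only [PropForm.forget1, PropForm.Sat, sat_subst_tru, sat_subst_fls]

theorem mem_res {c c' : Clause α} {p : α} {l : α × Bool} :
    l ∈ res c c' p ↔ (l ∈ c ∨ l ∈ c') ∧ l.1 ≠ p := by
  obtain ⟨q, b⟩ := l
  cases b <;> simp [res]

theorem litSat_insert {I : Set α} {p : α} {l : α × Bool} (h : l.1 ≠ p) :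
    litSat (insert p I) l ↔ litSat I l := by
  simp [litSat, h]

theorem litSat_diff {I : Set α} {p : α} {l : α × Bool} (h : l.1 ≠ p) :
    litSat (I \ {p}) l ↔ litSat I l := by
  simp [litSat, h]

theorem ne_of_not_mem {c : Clause α} {p : α} (h : (p, true) ∉ c ∧ (p, false) ∉ c)
    {l : α × Bool} (hl : l ∈ c) : l.1 ≠ p := by
  obtain ⟨q, b⟩ := l
  rintro rfl
  cases b
  · exact h.2 hl
  · exact h.1 hl

theorem unfold1_sat (T : Finset (Clause α)) (hT : ∀ c ∈ T, IsClause c) (p : α) (I : Set α) :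
    cnfSat I (unfold1 T p) ↔ cnfSat (insert p I) T ∨ cnfSat (I \ {p}) T := by
  constructor
  · intro h
    by_contra hcon
    simp only [cnfSat, not_or, not_forall] at hcon
    obtain ⟨⟨c1, hc1, hn1⟩, ⟨c2, hc2, hn2⟩⟩ := hcon
    have e1 : (p, true) ∉ c1 := fun hm => hn1 ⟨_, hm, by simp [litSat]⟩
    have e2 : (p, false) ∉ c2 := fun hm => hn2 ⟨_, hm, by simp [litSat]⟩
    have f1 : (p, false) ∈ c1 := by
      by_contra hm
      obtain ⟨l, hl, hs⟩ := h c1 (by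
        unfold unfold1
        exact Finset.mem_union_left _ (Finset.mem_filter.2 ⟨hc1, e1, hm⟩))
      exact hn1 ⟨l, hl, (litSat_insert (ne_of_not_mem ⟨e1, hm⟩ hl)).2 hs⟩
    have f2 : (p, true) ∈ c2 := by
      by_contra hm
      obtain ⟨l, hl, hs⟩ := h c2 (by
        unfold unfold1
        exact Finset.mem_union_left _ (Finset.mem_filter.2 ⟨hc2, hm, e2⟩))
      exact hn2 ⟨l, hl, (litSat_diff (ne_of_not_mem ⟨hm, e2⟩ hl)).2 hs⟩
    have hr : clauseSat I (res c2 c1 p) := by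
      by_cases hcl : IsClause (res c2 c1 p)
      · apply h
        unfold unfold1
        apply Finset.mem_union_right
        exact Finset.mem_image.2 ⟨(c2, c1),
          Finset.mem_filter.2 ⟨Finset.mem_product.2 ⟨hc2, hc1⟩, f2, f1, hcl⟩, rfl⟩
      · simp only [IsClause, not_forall, not_not] at hcl
        obtain ⟨q, hq1, hq2⟩ := hcl
        by_cases hq : q ∈ I
        · exact ⟨_, hq1, by simp [litSat, hq]⟩
        · exact ⟨_, hq2, by simp [litSat, hq]⟩
    obtain ⟨l, hl, hs⟩ := hr
    rw [mem_res] at hl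
    obtain ⟨hl | hl, hp⟩ := hl
    · exact hn2 ⟨l, hl, (litSat_diff hp).2 hs⟩
    · exact hn1 ⟨l, hl, (litSat_insert hp).2 hs⟩
  · intro h d hd
    unfold unfold1 at hd
    rcases Finset.mem_union.1 hd with hd | hd
    · obtain ⟨hd, hp⟩ := Finset.mem_filter.1 hd
      rcases h with h | h
      · obtain ⟨l, hl, hs⟩ := h d hd
        exact ⟨l, hl, (litSat_insert (ne_of_not_mem hp hl)).1 hs⟩
      · obtain ⟨l, hl, hs⟩ := h d hd
        exact ⟨l, hl, (litSat_diff (ne_of_not_mem hp hl)).1 hs⟩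
    · obtain ⟨⟨c, c'⟩, hcc, rfl⟩ := Finset.mem_image.1 hd
      obtain ⟨hm, h1, h2, h3⟩ := Finset.mem_filter.1 hcc
      obtain ⟨hc, hc'⟩ := Finset.mem_product.1 hm
      dsimp only at *
      rcases h with h | h
      · obtain ⟨⟨q, b⟩, hl, hs⟩ := h c' hc'
        have hq : q ≠ p := by
          rintro rfl
          cases b
          · simp [litSat] at hs
          · exact hT c' hc' q ⟨hl, h2⟩
        exact ⟨_, mem_res.2 ⟨Or.inr hl, hq⟩, (litSat_insert hq).1 hs⟩
      · obtain ⟨⟨q, b⟩, hl, hs⟩ := h c hc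
        have hq : q ≠ p := by
          rintro rfl
          cases b
          · exact hT c hc q ⟨h1, hl⟩
          · simp [litSat] at hs
        exact ⟨_, mem_res.2 ⟨Or.inl hl, hq⟩, (litSat_diff hq).1 hs⟩

/-- General principle: a clause property closed under resolution is kept by forgetting. -/
theorem forget_general (C : Clause α → Prop)
    (hC : ∀ c c' p, IsClause c → IsClause c' → C c → C c' → (p, true) ∈ c → (p, false) ∈ c' →
      C (res c c' p)) (V : List α) :
    ∀ (φ : PropForm α) (T : Finset (Clause α)), (∀ c ∈ T, IsClause c) → (∀ c ∈ T, C c) →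
      PropForm.equivalent φ (cnfToForm T) →
      ∃ T' : Finset (Clause α), (∀ c ∈ T', IsClause c) ∧ (∀ c ∈ T', C c) ∧
        PropForm.equivalent (PropForm.Forget φ V) (cnfToForm T') := by
  induction V with
  | nil => exact fun φ T h1 h2 h3 => ⟨T, h1, h2, h3⟩
  | cons p V ih =>
    intro φ T h1 h2 h3
    have hmem : ∀ d ∈ unfold1 T p, IsClause d ∧ C d := by
      intro d hd
      unfold unfold1 at hd
      rcases Finset.mem_union.1 hd with hd | hd
      · have := (Finset.mem_filter.1 hd).1
        exact ⟨h1 d this, h2 d this⟩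
      · obtain ⟨⟨c, c'⟩, hcc, rfl⟩ := Finset.mem_image.1 hd
        obtain ⟨hm, ha, hb, hcl⟩ := Finset.mem_filter.1 hcc
        obtain ⟨hc, hc'⟩ := Finset.mem_product.1 hm
        exact ⟨hcl, hC c c' p (h1 c hc) (h1 c' hc') (h2 c hc) (h2 c' hc') ha hb⟩
    refine ih (PropForm.forget1 φ p) (unfold1 T p) (fun d hd => (hmem d hd).1)
      (fun d hd => (hmem d hd).2) ?_
    intro I
    rw [sat_forget1, sat_cnfToForm, unfold1_sat T h1, h3, h3, sat_cnfToForm, sat_cnfToForm]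

theorem mem_posC {c : Clause α} {p : α} : p ∈ posC c ↔ (p, true) ∈ c := by
  simp [posC]

theorem mem_varsC {c : Clause α} {p : α} : p ∈ varsC c ↔ ∃ b, (p, b) ∈ c := by
  simp [varsC]

theorem QH_pos {Q H : Finset α} {c : Clause α} (h : QHcond Q H c) {p : α} (hp : p ∈ posC c)
    (hH : p ∈ H) : posC c ∩ H = {p} ∧ varsC c ∩ Q = ∅ := by
  have hm : p ∈ posC c ∩ H := Finset.mem_inter.2 ⟨hp, hH⟩
  have h1 : (posC c ∩ H).card = 1 :=
    le_antisymm h.2.1 (Finset.card_pos.2 ⟨p, hm⟩)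
  refine ⟨?_, h.2.2 h1⟩
  obtain ⟨q, hq⟩ := Finset.card_eq_one.1 h1
  rw [hq] at hm ⊢
  rw [Finset.mem_singleton.1 hm]

theorem QH_noPos {Q H : Finset α} {c : Clause α} (h : QHcond Q H c) {p : α} (hp : p ∈ varsC c)
    (hQ : p ∈ Q) : posC c ∩ H = ∅ := by
  by_contra hne
  obtain ⟨q, hq⟩ := Finset.nonempty_iff_ne_empty.2 hne
  obtain ⟨hq1, hq2⟩ := Finset.mem_inter.1 hq
  have := (QH_pos h hq1 hq2).2
  have hm : p ∈ varsC c ∩ Q := Finset.mem_inter.2 ⟨hp, hQ⟩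
  simp [this] at hm

theorem QH_res {Q H : Finset α} (hU : ∀ p, p ∈ Q ∨ p ∈ H) {c c' : Clause α} {p : α}
    (hcl' : IsClause c')
    (h : QHcond Q H c) (h' : QHcond Q H c') (hp : (p, true) ∈ c) (hp' : (p, false) ∈ c') :
    QHcond Q H (res c c' p) := by
  have hv : varsC (res c c' p) ∩ Q ⊆ (varsC c ∩ Q).erase p ∪ (varsC c' ∩ Q).erase p := by
    intro q
    simp only [Finset.mem_inter, Finset.mem_union, Finset.mem_erase, mem_varsC, mem_res]
    rintro ⟨⟨b, hb | hb, hne⟩, hq⟩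
    · exact Or.inl ⟨hne, ⟨b, hb⟩, hq⟩
    · exact Or.inr ⟨hne, ⟨b, hb⟩, hq⟩
  have hpos : posC (res c c' p) ∩ H ⊆ (posC c ∩ H).erase p ∪ (posC c' ∩ H).erase p := by
    intro q
    simp only [Finset.mem_inter, Finset.mem_union, Finset.mem_erase, mem_posC, mem_res]
    rintro ⟨⟨hb | hb, hne⟩, hq⟩
    · exact Or.inl ⟨hne, hb, hq⟩
    · exact Or.inr ⟨hne, hb, hq⟩
  have v : p ∈ varsC c := mem_varsC.2 ⟨_, hp⟩
  have v' : p ∈ varsC c' := mem_varsC.2 ⟨_, hp'⟩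
  rcases hU p with hQ | hH
  · have e : posC (res c c' p) ∩ H = ∅ := by
      rw [QH_noPos h v hQ, QH_noPos h' v' hQ] at hpos
      simpa using hpos
    refine ⟨?_, by simp [e], by simp [e]⟩
    have a := Finset.card_erase_of_mem (Finset.mem_inter.2 ⟨v, hQ⟩)
    have a' := Finset.card_erase_of_mem (Finset.mem_inter.2 ⟨v', hQ⟩)
    have b := Finset.card_le_card hv
    have d := Finset.card_union_le ((varsC c ∩ Q).erase p) ((varsC c' ∩ Q).erase p)
    have := h.1
    have := h'.1
    omega
  · obtain ⟨e1, e2⟩ := QH_pos h (mem_posC.2 hp) hH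
    have hv' : varsC (res c c' p) ∩ Q ⊆ varsC c' ∩ Q := by
      refine hv.trans ?_
      rw [e2]
      simpa using Finset.erase_subset _ _
    have hpos' : posC (res c c' p) ∩ H ⊆ posC c' ∩ H := by
      refine hpos.trans ?_
      rw [e1]
      simpa using Finset.erase_subset _ _
    have k := Finset.card_le_card hpos'
    refine ⟨(Finset.card_le_card hv').trans h'.1, k.trans h'.2.1, fun h1 => ?_⟩
    have := h'.2.2 (le_antisymm h'.2.1 (by omega))
    rw [this] at hv'
    simpa using hv'

theorem mem_renClause {W : Finset α} {c : Clause α} {p : α} {b : Bool} :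
    (p, b) ∈ renClause W c ↔ (p, if p ∈ W then !b else b) ∈ c := by
  unfold renClause renLit
  rw [Finset.mem_image]
  constructor
  · rintro ⟨⟨q, d⟩, hq, he⟩
    dsimp only at he
    split at he
    · obtain ⟨rfl, rfl⟩ := Prod.mk.inj he
      simpa [*] using hq
    · obtain ⟨rfl, rfl⟩ := Prod.mk.inj he
      simpa [*] using hq
  · intro h
    refine ⟨_, h, ?_⟩
    by_cases hp : p ∈ W <;> simp [hp]

theorem renClause_res (W : Finset α) (c c' : Clause α) (p : α) :
    renClause W (res c c' p) = res (renClause W c) (renClause W c') p := by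
  ext ⟨q, b⟩
  simp only [mem_renClause, mem_res]

theorem res_comm (c c' : Clause α) (p : α) : res c c' p = res c' c p := by
  unfold res
  rw [Finset.union_comm]

theorem renClause_isClause {W : Finset α} {c : Clause α} (h : IsClause c) :
    IsClause (renClause W c) := by
  intro p hp
  rw [mem_renClause, mem_renClause] at hp
  have := h p
  by_cases hw : p ∈ W <;> simp [hw] at hp <;> tauto

theorem forget_QH (Q H : Finset α) (hU : ∀ p, p ∈ Q ∨ p ∈ H) (W : Finset α) (V : List α)
    (φ : PropForm α) (T : Finset (Clause α)) (h1 : ∀ c ∈ T, IsClause c)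
    (h2 : ∀ c ∈ T, QHcond Q H (renClause W c)) (h3 : PropForm.equivalent φ (cnfToForm T)) :
      ∃ T' : Finset (Clause α), (∀ c ∈ T', IsClause c) ∧ (∀ c ∈ T', QHcond Q H (renClause W c)) ∧
        PropForm.equivalent (PropForm.Forget φ V) (cnfToForm T') := by
  refine forget_general (fun c => QHcond Q H (renClause W c)) ?_ V φ T h1 h2 h3
  intro c c' p hc hc' h h' hp hp'
  rw [renClause_res]
  by_cases hw : p ∈ W
  · rw [res_comm]
    exact QH_res hU (renClause_isClause hc) h' h (by simpa [mem_renClause, hw] using hp')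
      (by simpa [mem_renClause, hw] using hp)
  · exact QH_res hU (renClause_isClause hc') h h' (by simpa [mem_renClause, hw] using hp)
      (by simpa [mem_renClause, hw] using hp')

theorem renClause_empty (c : Clause α) : renClause ∅ c = c := by
  ext ⟨p, b⟩
  simp [mem_renClause]

theorem horn_iff (c : Clause α) : HornClause c ↔ QHcond ∅ Finset.univ c := by
  simp [HornClause, QHcond]

theorem krom_iff {c : Clause α} (h : IsClause c) : c.card ≤ 2 ↔ QHcond Finset.univ ∅ c := by
  have : (varsC c).card = c.card := by
    apply Finset.card_image_of_injOn
    rintro ⟨p, b⟩ hp ⟨q, d⟩ hq he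
    dsimp only at he
    subst he
    have := h p
    simp only [Finset.mem_coe] at hp hq
    cases b <;> cases d <;> simp_all
  simp [QHcond, this]

theorem hasQH_iff (T : Finset (Clause α)) :
    HasQHPartition T ↔ ∃ Q : Finset α, ∀ c ∈ T, QHcond Q Qᶜ c := by
  have sub : ∀ c ∈ T, ∀ x ∈ varsC c, x ∈ varsT T := fun c hc x hx =>
    Finset.le_sup (f := varsC) hc hx
  have pv : ∀ (c : Clause α), ∀ x ∈ posC c, x ∈ varsC c := fun c x hx =>
    mem_varsC.2 ⟨_, mem_posC.1 hx⟩
  constructor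
  · rintro ⟨Q, H, hd, hu, h⟩
    refine ⟨Q, fun c hc => ?_⟩
    have e : posC c ∩ Qᶜ = posC c ∩ H := by
      ext x
      simp only [Finset.mem_inter, Finset.mem_compl]
      refine and_congr_right fun hx => ?_
      have h1 : x ∈ Q ∪ H := hu ▸ sub c hc x (pv c x hx)
      have h2 : x ∉ Q ∩ H := by simp [hd]
      simp only [Finset.mem_union, Finset.mem_inter] at h1 h2
      tauto
    unfold QHcond
    rw [e]
    exact h c hc
  · rintro ⟨Q, h⟩
    refine ⟨varsT T ∩ Q, varsT T \ Q, ?_, ?_, fun c hc => ?_⟩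
    · ext x
      simp only [Finset.mem_inter, Finset.mem_sdiff, Finset.notMem_empty]
      tauto
    · ext x
      simp only [Finset.mem_inter, Finset.mem_sdiff, Finset.mem_union]
      tauto
    · have e1 : varsC c ∩ (varsT T ∩ Q) = varsC c ∩ Q := by
        ext x
        have := sub c hc x
        simp only [Finset.mem_inter]
        tauto
      have e2 : posC c ∩ (varsT T \ Q) = posC c ∩ Qᶜ := by
        ext x
        have := sub c hc x
        have := pv c x
        simp only [Finset.mem_inter, Finset.mem_sdiff, Finset.mem_compl]
        tauto
      unfold QHcond
      rw [e1, e2]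
      exact h c hc

/-- If a CNF theory `Σ` is Horn (resp. Krom, renamable-Horn, q-Horn)
expressible, then `Forget(Σ, V)` is Horn (resp. Krom, renamable-Horn, q-Horn)
expressible. -/
theorem forget_preserves_expressibility
    (S : Finset (Clause α)) (hS : ∀ c ∈ S, IsClause c) (V : List α) :
    (HornExpressible (cnfToForm S) →
      HornExpressible (PropForm.Forget (cnfToForm S) V)) ∧
    (KromExpressible (cnfToForm S) →
      KromExpressible (PropForm.Forget (cnfToForm S) V)) ∧
    (RenHornExpressible (cnfToForm S) →
      RenHornExpressible (PropForm.Forget (cnfToForm S) V)) ∧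
    (QHornExpressible (cnfToForm S) →
      QHornExpressible (PropForm.Forget (cnfToForm S) V)) := by
  refine ⟨?_, ?_, ?_, ?_⟩
  · rintro ⟨T, h1, h2, h3⟩
    obtain ⟨T', a, b, d⟩ := forget_QH ∅ Finset.univ (by simp) ∅ V _ T h1
      (fun c hc => by rw [renClause_empty]; exact (horn_iff c).1 (h2 c hc)) h3
    exact ⟨T', a, fun c hc => (horn_iff c).2 (by simpa [renClause_empty] using b c hc), d⟩
  · rintro ⟨T, h1, h2, h3⟩
    obtain ⟨T', a, b, d⟩ := forget_QH Finset.univ ∅ (by simp) ∅ V _ T h1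
      (fun c hc => by rw [renClause_empty]; exact (krom_iff (h1 c hc)).1 (h2 c hc)) h3
    exact ⟨T', a, fun c hc => (krom_iff (a c hc)).2
      (by have := b c hc; rwa [renClause_empty] at this), d⟩
  · rintro ⟨T, h1, ⟨W, h2⟩, h3⟩
    obtain ⟨T', a, b, d⟩ := forget_QH ∅ Finset.univ (by simp) W V _ T h1
      (fun c hc => (horn_iff _).1 (h2 _ (Finset.mem_image_of_mem _ hc))) h3
    refine ⟨T', a, ⟨W, fun c hc => ?_⟩, d⟩
    obtain ⟨e, he, rfl⟩ := Finset.mem_image.1 hc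
    exact (horn_iff _).2 (b e he)
  · rintro ⟨T, h1, ⟨W, h2⟩, h3⟩
    obtain ⟨Q, hQ⟩ := (hasQH_iff _).1 h2
    obtain ⟨T', a, b, d⟩ := forget_QH Q Qᶜ (fun p => by simp [em]) W V _ T h1
      (fun c hc => hQ _ (Finset.mem_image_of_mem _ hc)) h3
    refine ⟨T', a, ⟨W, (hasQH_iff _).2 ⟨Q, fun c hc => ?_⟩⟩, d⟩
    obtain ⟨e, he, rfl⟩ := Finset.mem_image.1 hc
    exact b e he
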